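/- Let Xᵢ, X_{−i}, M, Z, T be discrete random variables with finite range on a common probability space, where Xᵢ takes values in a finite set 𝒳ᵢ, X_{−i} in a finite set 𝒳_{−i}, and T in a finite set 𝒯. Assume: (a) Xᵢ and X_{−i} are conditionally independent given (M, Z); (b) for all x ∈ 𝒳ᵢ, x' ∈ 𝒳_{−i}, m, z with Pr[Xᵢ=x, X_{−i}=x', M=m, Z=z] > 0 and all τ ∈ 𝒯, Pr[T=τ | Xᵢ=x, X_{−i}=x', M=m, Z=z] = Pr[T=τ | Xᵢ=x, X_{−i}=x']; and (c) there exist nonnegative functions qᵢ : 𝒳ᵢ×𝒯 → ℝ and q_{−i} : 𝒳_{−i}×𝒯 → ℝ such that Pr[T=τ | Xᵢ=x, X_{−i}=x'] = qᵢ(x,τ)·q_{−i}(x',τ) whenever Pr[Xᵢ=x, X_{−i}=x'] > 0. Then there exists a function c such that for all x, m, z with Pr[Xᵢ=x, M=m, Z=z] > 0 and all τ ∈ 𝒯: Pr[T=τ | Xᵢ=x, M=m, Z=z] = qᵢ(x,τ)·c(m,z,τ). -/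

import Mathlib

open Finset

noncomputable section

open Classical in
/-- Probability of an event under a probability mass function on a finite sample space. -/
def pr {Ω : Type*} [Fintype Ω] (p : Ω → ℝ) (E : Ω → Prop) : ℝ :=
  ∑ ω ∈ Finset.univ.filter E, p ω

/-- Conditional probability `Pr[E | F] = Pr[E ∧ F] / Pr[F]`. -/
def condPr {Ω : Type*} [Fintype Ω] (p : Ω → ℝ) (E F : Ω → Prop) : ℝ :=
  pr p (fun ω => E ω ∧ F ω) / pr p F

theorem pr_nonneg' {Ω : Type*} [Fintype Ω] (p : Ω → ℝ) (hp : ∀ ω, 0 ≤ p ω)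
    (E : Ω → Prop) : 0 ≤ pr p E :=
  Finset.sum_nonneg fun ω _ => hp ω

theorem pr_mono' {Ω : Type*} [Fintype Ω] (p : Ω → ℝ) (hp : ∀ ω, 0 ≤ p ω)
    (E F : Ω → Prop) (h : ∀ ω, E ω → F ω) : pr p E ≤ pr p F := by
  classical
  unfold pr
  apply Finset.sum_le_sum_of_subset_of_nonneg
  · intro ω
    simp only [Finset.mem_filter, Finset.mem_univ, true_and]
    exact h ω
  · intro ω _ _
    exact hp ω

theorem pr_total {Ω β : Type*} [Fintype Ω] [Fintype β] (p : Ω → ℝ)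
    (Y : Ω → β) (E : Ω → Prop) (F : β → Ω → Prop)
    (h : ∀ y ω, F y ω ↔ (Y ω = y ∧ E ω)) : pr p E = ∑ y, pr p (F y) := by
  classical
  unfold pr
  simp only [Finset.sum_filter]
  rw [Finset.sum_comm]
  refine Finset.sum_congr rfl fun ω _ => ?_
  simp only [h]
  by_cases hE : E ω <;> simp [hE]

/-- Specialized rectangularity lemma.  Suppose (a) `Xᵢ` and `X₋ᵢ` are conditionally
independent given `(M, Z)`; (b) conditioned on the full input `(Xᵢ, X₋ᵢ)`, the
transcript `T` is independent of `(M, Z)`; and (c) the conditional distribution of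
`T` given the full input factorizes as `qᵢ(x,τ)·q₋ᵢ(x',τ)`.  Then there is a
function `c` such that `Pr[T=τ | Xᵢ=x, M=m, Z=z] = qᵢ(x,τ)·c(m,z,τ)` whenever
`Pr[Xᵢ=x, M=m, Z=z] > 0`. -/
theorem special_rectangularity {Ω Xt Xt' γ δ Tt : Type*} [Fintype Ω]
    [Fintype Xt] [Fintype Xt'] [Fintype Tt]
    (p : Ω → ℝ) (hp : ∀ ω, 0 ≤ p ω) (hsum : ∑ ω, p ω = 1)
    (Xi : Ω → Xt) (Xmi : Ω → Xt') (M : Ω → γ) (Z : Ω → δ) (T : Ω → Tt)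
    (hindep : ∀ (x : Xt) (x' : Xt') (m : γ) (z : δ),
      pr p (fun ω => Xi ω = x ∧ Xmi ω = x' ∧ M ω = m ∧ Z ω = z) *
          pr p (fun ω => M ω = m ∧ Z ω = z) =
        pr p (fun ω => Xi ω = x ∧ M ω = m ∧ Z ω = z) *
          pr p (fun ω => Xmi ω = x' ∧ M ω = m ∧ Z ω = z))
    (hmarkov : ∀ (x : Xt) (x' : Xt') (m : γ) (z : δ),
      0 < pr p (fun ω => Xi ω = x ∧ Xmi ω = x' ∧ M ω = m ∧ Z ω = z) →
      ∀ τ : Tt,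
        condPr p (fun ω => T ω = τ)
            (fun ω => Xi ω = x ∧ Xmi ω = x' ∧ M ω = m ∧ Z ω = z) =
          condPr p (fun ω => T ω = τ) (fun ω => Xi ω = x ∧ Xmi ω = x'))
    (qi : Xt → Tt → ℝ) (qmi : Xt' → Tt → ℝ)
    (hqi : ∀ x τ, 0 ≤ qi x τ) (hqmi : ∀ x' τ, 0 ≤ qmi x' τ)
    (hrect : ∀ (x : Xt) (x' : Xt'),
      0 < pr p (fun ω => Xi ω = x ∧ Xmi ω = x') →
      ∀ τ : Tt,
        condPr p (fun ω => T ω = τ) (fun ω => Xi ω = x ∧ Xmi ω = x') =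
          qi x τ * qmi x' τ) :
    ∃ c : γ → δ → Tt → ℝ,
      ∀ (x : Xt) (m : γ) (z : δ),
        0 < pr p (fun ω => Xi ω = x ∧ M ω = m ∧ Z ω = z) →
        ∀ τ : Tt,
          condPr p (fun ω => T ω = τ) (fun ω => Xi ω = x ∧ M ω = m ∧ Z ω = z) =
            qi x τ * c m z τ := by
  refine ⟨fun m z τ => ∑ x', pr p (fun ω => Xmi ω = x' ∧ M ω = m ∧ Z ω = z) /
    pr p (fun ω => M ω = m ∧ Z ω = z) * qmi x' τ, ?_⟩
  intro x m z hpos τ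
  have hmz : 0 < pr p (fun ω => M ω = m ∧ Z ω = z) :=
    lt_of_lt_of_le hpos (pr_mono' p hp _ _ fun ω h => h.2)
  have key : ∀ x', pr p (fun ω => T ω = τ ∧ Xi ω = x ∧ Xmi ω = x' ∧ M ω = m ∧ Z ω = z) =
      pr p (fun ω => Xi ω = x ∧ Xmi ω = x' ∧ M ω = m ∧ Z ω = z) * (qi x τ * qmi x' τ) := by
    intro x'
    rcases (pr_nonneg' p hp
      (fun ω => Xi ω = x ∧ Xmi ω = x' ∧ M ω = m ∧ Z ω = z)).eq_or_lt with h0 | h0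
    · rw [← h0, zero_mul]
      refine le_antisymm ?_ (pr_nonneg' p hp _)
      rw [h0]
      exact pr_mono' p hp _ _ fun ω h => h.2
    · have h1 := hmarkov x x' m z h0 τ
      rw [hrect x x' (lt_of_lt_of_le h0 (pr_mono' p hp _ _ fun ω h => ⟨h.1, h.2.1⟩)) τ] at h1
      unfold condPr at h1
      rw [div_eq_iff h0.ne'] at h1
      rw [h1, mul_comm]
  unfold condPr
  rw [div_eq_iff hpos.ne', pr_total p Xmi _
    (fun x' ω => T ω = τ ∧ Xi ω = x ∧ Xmi ω = x' ∧ M ω = m ∧ Z ω = z)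
    (fun y ω => by tauto), Finset.mul_sum, Finset.sum_mul]
  refine Finset.sum_congr rfl fun x' _ => ?_
  rw [key x', eq_div_of_mul_eq hmz.ne' (hindep x x' m z)]
  ring
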